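/- Let (S, 𝒮) and (S', 𝒮') be measurable spaces such that 𝒮' contains all singleton sets, and let φ : S → S' be measurable. Let Π be a Markov kernel from S to S, Q a Markov kernel from S' to S', and K a Markov kernel from S' to S, satisfying (i) K(y; φ^{-1}{y}) = 1 for every y ∈ S', and (ii) the intertwining K Π = Q K, where (K Π)(y; A) := ∫_S K(y; dz) Π(z; A) and (Q K)(y; A) := ∫_{S'} Q(y; dz') K(z'; A). Then for every probability measure η on S', every n ≥ 0, all bounded measurable g₀, …, g_n : S' → ℝ and f : S → ℝ: ∫_{S'} η(dy) ∫_S K(y; dx₀) g₀(φ(x₀)) ∫_S Π(x₀; dx₁) g₁(φ(x₁)) ⋯ ∫_S Π(x_{n−1}; dx_n) g_n(φ(x_n)) f(x_n) = ∫_{S'} η(dy₀) g₀(y₀) ∫_{S'} Q(y₀; dy₁) g₁(y₁) ⋯ ∫_{S'} Q(y_{n−1}; dy_n) g_n(y_n) ∫_S K(y_n; dx) f(x). (Equivalently: if X = (X(n), n ≥ 0) is a time-homogeneous Markov chain on S with transition kernel Π and initial distribution η K, then Y(n) := φ(X(n)) is a time-homogeneous Markov chain with initial distribution η and transition kernel Q,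 and E[f(X(n)) | Y(0), …, Y(n)] = (K f)(Y(n)) a.s.) -/

import Mathlib

open MeasureTheory ProbabilityTheory

noncomputable section

/-- Iterated integral `x ↦ g₀(φ x) ∫ Π(x;dx₁) g₁(φ x₁) ⋯ ∫ Π(x_{m−1};dx_m) g_m(φ x_m) f(x_m)`
(with `m+1` test functions `g`). -/
def lhsAux {S S' : Type*} [MeasurableSpace S] (φ : S → S') (Pi : Kernel S S) (f : S → ℝ) :
    (m : ℕ) → (Fin (m + 1) → S' → ℝ) → S → ℝ
  | 0, g, x => g 0 (φ x) * f x
  | m + 1, g, x => g 0 (φ x) * ∫ y, lhsAux φ Pi f m (Fin.tail g) y ∂(Pi x)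

/-- Iterated integral `y ↦ g₀(y) ∫ Q(y;dy₁) g₁(y₁) ⋯ ∫ Q(y_{m−1};dy_m) g_m(y_m) ∫ K(y_m;dx) f(x)`
(with `m+1` test functions `g`). -/
def rhsAux {S S' : Type*} [MeasurableSpace S] [MeasurableSpace S']
    (Q : Kernel S' S') (K : Kernel S' S) (f : S → ℝ) :
    (m : ℕ) → (Fin (m + 1) → S' → ℝ) → S' → ℝ
  | 0, g, y => g 0 y * ∫ x, f x ∂(K y)
  | m + 1, g, y => g 0 y * ∫ z, rhsAux Q K f m (Fin.tail g) z ∂(Q y)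

end

theorem lhsAux_meas_bdd {S S' : Type*} [MeasurableSpace S] [MeasurableSpace S']
    (φ : S → S') (hφ : Measurable φ) (Pi : Kernel S S) [IsMarkovKernel Pi]
    (f : S → ℝ) (hf : Measurable f) (hfb : ∃ C, ∀ x, |f x| ≤ C) :
    ∀ (m : ℕ) (g : Fin (m + 1) → S' → ℝ),
      (∀ i, Measurable (g i)) → (∀ i, ∃ C, ∀ y, |g i y| ≤ C) →
      Measurable (lhsAux φ Pi f m g) ∧ ∃ C, ∀ x, |lhsAux φ Pi f m g x| ≤ C := by
  intro m
  induction m with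
  | zero =>
    intro g hg hgb
    obtain ⟨C, hC⟩ := hfb
    obtain ⟨D, hD⟩ := hgb 0
    refine ⟨((hg 0).comp hφ).mul hf, D * C, fun x => ?_⟩
    simp only [lhsAux, abs_mul]
    exact mul_le_mul (hD _) (hC _) (abs_nonneg _) ((abs_nonneg _).trans (hD (φ x)))
  | succ m ih =>
    intro g hg hgb
    obtain ⟨hm, C, hC⟩ := ih (Fin.tail g) (fun i => hg i.succ) (fun i => hgb i.succ)
    obtain ⟨D, hD⟩ := hgb 0
    refine ⟨((hg 0).comp hφ).mul hm.stronglyMeasurable.integral_kernel.measurable,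
      D * C, fun x => ?_⟩
    simp only [lhsAux, abs_mul]
    refine mul_le_mul (hD _) ?_ (abs_nonneg _) ((abs_nonneg _).trans (hD (φ x)))
    have := norm_integral_le_of_norm_le_const (μ := Pi x) (f := lhsAux φ Pi f m (Fin.tail g))
      (Filter.Eventually.of_forall hC)
    simpa using this

theorem integral_fiber {S S' : Type*} [MeasurableSpace S] [MeasurableSpace S']
    [MeasurableSingletonClass S'] (φ : S → S') (hφ : Measurable φ)
    (K : Kernel S' S) [IsMarkovKernel K] (hK : ∀ y : S', K y (φ ⁻¹' {y}) = 1)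
    (g : S' → ℝ) (h : S → ℝ) (y : S') :
    ∫ x, g (φ x) * h x ∂(K y) = g y * ∫ x, h x ∂(K y) := by
  rw [← integral_const_mul]
  apply integral_congr_ae
  have : ∀ᵐ x ∂(K y), x ∈ φ ⁻¹' {y} :=
    (mem_ae_iff_prob_eq_one (hφ (measurableSet_singleton y))).2 (hK y)
  filter_upwards [this] with x hx
  rw [Set.mem_preimage, Set.mem_singleton_iff] at hx
  rw [hx]

theorem integral_lhsAux {S S' : Type*} [MeasurableSpace S] [MeasurableSpace S']
    [MeasurableSingletonClass S']
    (φ : S → S') (hφ : Measurable φ)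
    (Pi : Kernel S S) [IsMarkovKernel Pi]
    (Q : Kernel S' S') [IsMarkovKernel Q]
    (K : Kernel S' S) [IsMarkovKernel K]
    (hK : ∀ y : S', K y (φ ⁻¹' {y}) = 1)
    (hint : Pi ∘ₖ K = K ∘ₖ Q)
    (f : S → ℝ) (hf : Measurable f) (hfb : ∃ C, ∀ x, |f x| ≤ C) :
    ∀ (m : ℕ) (g : Fin (m + 1) → S' → ℝ),
      (∀ i, Measurable (g i)) → (∀ i, ∃ C, ∀ y, |g i y| ≤ C) →
      ∀ y, ∫ x, lhsAux φ Pi f m g x ∂(K y) = rhsAux Q K f m g y := by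
  intro m
  induction m with
  | zero =>
    intro g hg hgb y
    simp only [lhsAux, rhsAux]
    exact integral_fiber φ hφ K hK (g 0) f y
  | succ m ih =>
    intro g hg hgb y
    simp only [lhsAux, rhsAux]
    have ht : ∀ i, Measurable (Fin.tail g i) := fun i => hg i.succ
    have htb : ∀ i, ∃ C, ∀ y, |Fin.tail g i y| ≤ C := fun i => hgb i.succ
    obtain ⟨hm, C, hC⟩ := lhsAux_meas_bdd φ hφ Pi f hf hfb m (Fin.tail g) ht htb
    rw [integral_fiber φ hφ K hK (g 0) (fun x => ∫ z, lhsAux φ Pi f m (Fin.tail g) z ∂(Pi x)) y]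
    have hI : ∀ (μ : Measure S) [IsFiniteMeasure μ],
        Integrable (lhsAux φ Pi f m (Fin.tail g)) μ := fun μ _ =>
      Integrable.of_bound hm.aestronglyMeasurable C (Filter.Eventually.of_forall hC)
    rw [← Kernel.integral_comp (hI _), hint, Kernel.integral_comp (hI _)]
    simp_rw [ih (Fin.tail g) ht htb]

/-- (Markov functions theorem, finite-dimensional-distribution form:
under `K(y; φ⁻¹{y}) = 1` and the intertwining `K Π = Q K`, the laws of the `Π`-chain started
from `η K`, tested against functions of `φ` and a final `f`, match the corresponding iterated
`Q`/`K` integrals). -/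
theorem markov_functions
    {S S' : Type*} [MeasurableSpace S] [MeasurableSpace S'] [MeasurableSingletonClass S']
    (φ : S → S') (hφ : Measurable φ)
    (Pi : Kernel S S) [IsMarkovKernel Pi]
    (Q : Kernel S' S') [IsMarkovKernel Q]
    (K : Kernel S' S) [IsMarkovKernel K]
    (hK : ∀ y : S', K y (φ ⁻¹' {y}) = 1)
    (hint : Pi ∘ₖ K = K ∘ₖ Q) :
    ∀ (η : Measure S'), IsProbabilityMeasure η →
    ∀ (m : ℕ) (g : Fin (m + 1) → S' → ℝ),
      (∀ i, Measurable (g i)) → (∀ i, ∃ C, ∀ y, |g i y| ≤ C) →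
      ∀ f : S → ℝ, Measurable f → (∃ C, ∀ x, |f x| ≤ C) →
      ∫ y, (∫ x, lhsAux φ Pi f m g x ∂(K y)) ∂η = ∫ y, rhsAux Q K f m g y ∂η := by
  intro η _ m g hg hgb f hf hfb
  simp_rw [integral_lhsAux φ hφ Pi Q K hK hint f hf hfb m g hg hgb]
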